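/- Whatever the value of the memory parameter p in [0,1], the estimator p̂_n is strongly consistent: p̂_n converges to p almost surely as n → ∞. -/

import Mathlib

open MeasureTheory ProbabilityTheory Filter Finset
open scoped BoundedContinuousFunction ENNReal NNReal Topology

noncomputable section

variable {Ω : Type*}

/-- Position of the elephant random walk: `S n = X 1 + ⋯ + X n`. -/
def erwS (X : ℕ → Ω → ℝ) (n : ℕ) (ω : Ω) : ℝ :=
  ∑ k ∈ Finset.Icc 1 n, X k ω

/-- `V n = 4 ∑_{k=1}^{n-1} (S k / k)²`, the approximate conditional Fisher information. -/
def erwV (X : ℕ → Ω → ℝ) (n : ℕ) (ω : Ω) : ℝ :=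
  4 * ∑ k ∈ Finset.Icc 1 (n - 1), (erwS X k ω / k) ^ 2

/-- The quasi-maximum likelihood estimator `p̂ n` of the memory parameter. -/
def erwPhat (X : ℕ → Ω → ℝ) (n : ℕ) (ω : Ω) : ℝ :=
  (∑ k ∈ Finset.Icc 1 (n - 1), (erwS X k ω / k) * (X (k + 1) ω + erwS X k ω / k)) /
    (2 * ∑ k ∈ Finset.Icc 1 (n - 1), (erwS X k ω / k) ^ 2)

/-- The elephant random walk hypotheses with memory parameter `p ∈ [0,1]`:
the steps take values in `{-1, 1}`, are adapted to the filtration `ℱ`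
(which plays the role of `σ(X_1, …, X_n)`), and
`E[X_{n+1} | ℱ_n] = (2p - 1) · S_n / n` almost surely. -/
def IsERW {m0 : MeasurableSpace Ω} (μ : Measure Ω) (ℱ : Filtration ℕ m0)
    (X : ℕ → Ω → ℝ) (p : ℝ) : Prop :=
  0 ≤ p ∧ p ≤ 1 ∧
  (∀ n, 1 ≤ n → ∀ ω, X n ω = 1 ∨ X n ω = -1) ∧
  (∀ n, 1 ≤ n → Measurable[ℱ n] (X n)) ∧
  (∀ n, 1 ≤ n → μ[X (n + 1) | ℱ n] =ᵐ[μ] fun ω => (2 * p - 1) * (erwS X n ω / n))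

/-!
Write `u k = S k / k` and `ξ k = X (k + 1) - (2p - 1) u k`. Then `p̂ n - p = 2 M n / V n` for the
martingale `M n = ∑ k < n, u k * ξ k`, whose squared increments are at most `4 (u n)²`, the
increments of `V`. The strong law for martingales gives `M = o(B)` almost surely on `B → ∞` for
every predictable `B` whose increments dominate the conditional variances of the increments of `M`.
Taking `B = V`, it remains to see that `V → ∞`.

Apply the same law with `B = V + H`, where `H n` is the `n`-th harmonic number. If `∑ u k²` were
finite, then `V` would be bounded, hence `M = o(H)` and
`∑ k < n, u k * X (k + 1) = M n + (2p - 1) V n / 4 = o(H)`. But squaring the recursion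
`(k + 1) u (k + 1) = k u k + X (k + 1)` and summing shows `n (u n)² ≥ H n / 2 - O(1) - o(H n)`, so
eventually `(u n)² ≥ 1 / n`, which is not summable.
-/

theorem isLittleO_sum_of_tendsto_sum_inv_smul {E : Type*} [NormedAddCommGroup E] [NormedSpace ℝ E]
    {x : ℕ → E} {B : ℕ → ℝ} {L : E} (hmono : Monotone B) (hB₀ : 0 < B 0)
    (hB : Tendsto B atTop atTop)
    (hL : Tendsto (fun n => ∑ k ∈ range n, (B (k + 1))⁻¹ • x k) atTop (𝓝 L)) :
    (fun n => ∑ k ∈ range n, x k) =o[atTop] B := by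
  set r : ℕ → E := fun n => ∑ k ∈ range n, (B (k + 1))⁻¹ • x k - L with hr
  have abel (n : ℕ) : ∑ k ∈ range n, x k =
      B n • r n - ∑ k ∈ range n, (B (k + 1) - B k) • r k + B 0 • L := by
    induction n with
    | zero => simp [hr]
    | succ n ih =>
      have hx : x n = B (n + 1) • (r (n + 1) - r n) := by
        simp [hr, sum_range_succ, smul_inv_smul₀ (hB₀.trans_le (hmono (Nat.zero_le _))).ne']
      rw [sum_range_succ, sum_range_succ, ih, hx]
      module
  have hr₀ : r =o[atTop] fun _ => (1 : ℝ) :=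
    (Asymptotics.isLittleO_one_iff ℝ).2 (by simpa using hL.sub_const L)
  have boundary : (fun n => B n • r n) =o[atTop] B := by
    simpa using (Asymptotics.isBigO_refl B atTop).smul_isLittleO hr₀
  have hB_norm : Tendsto (norm ∘ B) atTop atTop := tendsto_norm_atTop_atTop.comp hB
  have increments : (fun n => ∑ k ∈ range n, (B (k + 1) - B k) • r k) =o[atTop] B := by
    have h : (fun k => (B (k + 1) - B k) • r k) =o[atTop] fun k => B (k + 1) - B k := by
      simpa using (Asymptotics.isBigO_refl (fun k => B (k + 1) - B k) atTop).smul_isLittleO hr₀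
    have h_sum := h.sum_range (fun k => sub_nonneg.2 (hmono k.le_succ))
      (by
        simp only [sum_range_sub]
        exact tendsto_atTop_add_const_right _ _ hB)
    simp only [sum_range_sub] at h_sum
    exact h_sum.trans_isBigO ((Asymptotics.isBigO_refl B atTop).sub
      (Asymptotics.isLittleO_const_left.2 (.inr hB_norm)).isBigO)
  simpa only [abel] using (boundary.sub increments).add
    (Asymptotics.isLittleO_const_left.2 (.inr hB_norm))

section Martingale

variable {m0 : MeasurableSpace Ω} {μ : Measure Ω} {ℱ : Filtration ℕ m0}
  {M : ℕ → Ω → ℝ}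

theorem condExp_mul_eq_zero_of_condExp_eq_zero {m : MeasurableSpace Ω} {f g : Ω → ℝ}
    (hf : StronglyMeasurable[m] f) (hfg : Integrable (f * g) μ) (hg : Integrable g μ)
    (hg₀ : μ[g | m] =ᵐ[μ] 0) : μ[f * g | m] =ᵐ[μ] 0 := by
  filter_upwards [condExp_mul_of_stronglyMeasurable_left hf hfg hg, hg₀] with ω hfg_eq hg_eq
  simp [hfg_eq, hg_eq]

theorem ae_monotone_of_condExp_sq_le {B : ℕ → Ω → ℝ}
    (hvar : ∀ n, μ[(M (n + 1) - M n) ^ 2 | ℱ n] ≤ᵐ[μ] B (n + 1) - B n) :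
    ∀ᵐ ω ∂μ, Monotone fun n => B n ω := by
  have hnonneg (n : ℕ) : 0 ≤ᵐ[μ] μ[(M (n + 1) - M n) ^ 2 | ℱ n] :=
    condExp_nonneg (.of_forall fun ω => sq_nonneg _)
  filter_upwards [ae_all_iff.2 hvar, ae_all_iff.2 hnonneg] with ω hle h0
  exact monotone_nat_of_le_succ fun n => sub_nonneg.1 ((h0 n).trans (hle n))

/-- The transform `∑ k < n, v (k + 1) (M (k + 1) - M k)` of `M` by a predictable process `v`,
the discrete stochastic integral of `v` against `M`. -/
def martingaleTransform (v M : ℕ → Ω → ℝ) (n : ℕ) : Ω → ℝ :=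
  ∑ k ∈ range n, v (k + 1) * (M (k + 1) - M k)

theorem martingaleTransform_succ_sub (v M : ℕ → Ω → ℝ) (n : ℕ) :
    martingaleTransform v M (n + 1) - martingaleTransform v M n =
      v (n + 1) * (M (n + 1) - M n) := by
  simp [martingaleTransform, sum_range_succ]

theorem memLp_martingaleTransform {q : ℝ≥0∞} {v : ℕ → Ω → ℝ} {R : ℝ} (hM : ∀ n, MemLp (M n) q μ)
    (hv : IsStronglyPredictable ℱ v) (hvR : ∀ n, ∀ᵐ ω ∂μ, |v (n + 1) ω| ≤ R) (n : ℕ) :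
    MemLp (martingaleTransform v M n) q μ :=
  memLp_finsetSum' _ fun k _ => by
    have hΔ := (hM (k + 1)).sub (hM k)
    refine hΔ.of_le_mul (c := R) (((hv.measurable_add_one k).mono (ℱ.le k)).aestronglyMeasurable.mul
      hΔ.aestronglyMeasurable) ?_
    filter_upwards [hvR k] with ω hω
    rw [Pi.mul_apply, norm_mul]
    exact mul_le_mul_of_nonneg_right hω (norm_nonneg _)

variable [IsFiniteMeasure μ]

theorem condExp_succ_sub_eq_zero (hM : Martingale M ℱ μ) (n : ℕ) :
    μ[M (n + 1) - M n | ℱ n] =ᵐ[μ] 0 := by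
  have hn : μ[M n | ℱ n] = M n :=
    condExp_of_stronglyMeasurable (ℱ.le n) (hM.stronglyMeasurable n) (hM.integrable n)
  filter_upwards [condExp_sub (hM.integrable (n + 1)) (hM.integrable n) (ℱ n),
    hM.condExp_ae_eq n.le_succ] with ω h_sub h_succ
  simp [h_sub, h_succ, hn]

theorem integral_sq_succ_of_martingale (hM : Martingale M ℱ μ) (hM₂ : ∀ n, MemLp (M n) 2 μ)
    (n : ℕ) :
    ∫ ω, M (n + 1) ω ^ 2 ∂μ = ∫ ω, M n ω ^ 2 ∂μ + ∫ ω, (M (n + 1) ω - M n ω) ^ 2 ∂μ := by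
  have hΔ : MemLp (M (n + 1) - M n) 2 μ := (hM₂ (n + 1)).sub (hM₂ n)
  have hMΔ : Integrable (M n * (M (n + 1) - M n)) μ := (hM₂ n).integrable_mul hΔ
  have orthogonal : ∫ ω, (M n * (M (n + 1) - M n)) ω ∂μ = 0 := by
    rw [← integral_condExp (ℱ.le n), integral_congr_ae (condExp_mul_eq_zero_of_condExp_eq_zero
      (hM.stronglyMeasurable n) hMΔ (hΔ.integrable one_le_two) (condExp_succ_sub_eq_zero hM n))]
    simp
  calc ∫ ω, M (n + 1) ω ^ 2 ∂μ
      = ∫ ω, M n ω ^ 2 + (M (n + 1) ω - M n ω) ^ 2 + 2 * (M n * (M (n + 1) - M n)) ω ∂μ := by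
        congr with ω
        simp only [Pi.mul_apply, Pi.sub_apply]
        ring
    _ = _ := by
        have hsq : Integrable (fun ω => (M (n + 1) ω - M n ω) ^ 2) μ := hΔ.integrable_sq
        rw [integral_add (by exact (hM₂ n).integrable_sq.add hsq) (hMΔ.const_mul 2),
          integral_add (hM₂ n).integrable_sq hsq, integral_const_mul, orthogonal]
        ring

theorem ae_exists_tendsto_of_integral_sq_le (hM : Martingale M ℱ μ)
    (hM₂ : ∀ n, MemLp (M n) 2 μ) {C : ℝ} (hC : ∀ n, ∫ ω, M n ω ^ 2 ∂μ ≤ C) :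
    ∀ᵐ ω ∂μ, ∃ c, Tendsto (fun n => M n ω) atTop (𝓝 c) := by
  refine hM.submartingale.exists_ae_tendsto_of_bdd (R := (μ.real Set.univ + C).toNNReal) fun n => ?_
  rw [eLpNorm_one_eq_lintegral_enorm, ← ofReal_integral_norm_eq_lintegral_enorm (hM.integrable n)]
  refine ENNReal.ofReal_le_ofReal ?_
  calc ∫ ω, ‖M n ω‖ ∂μ ≤ ∫ ω, 1 + M n ω ^ 2 ∂μ := by
        refine integral_mono (hM.integrable n).norm
          ((integrable_const 1).add (hM₂ n).integrable_sq) fun ω => ?_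
        rw [Real.norm_eq_abs, ← sq_abs]
        nlinarith [sq_nonneg (|M n ω| - 1), abs_nonneg (M n ω)]
    _ ≤ μ.real Set.univ + C := by
        rw [integral_add (integrable_const 1) (hM₂ n).integrable_sq]
        simpa using hC n

theorem martingale_martingaleTransform {v : ℕ → Ω → ℝ} {R : ℝ} (hM : Martingale M ℱ μ)
    (hv : IsStronglyPredictable ℱ v) (hvR : ∀ n, ∀ᵐ ω ∂μ, |v (n + 1) ω| ≤ R) :
    Martingale (martingaleTransform v M) ℱ μ := by
  have integrable (n : ℕ) : Integrable (martingaleTransform v M n) μ :=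
    memLp_one_iff_integrable.1 <| memLp_martingaleTransform
      (fun n => memLp_one_iff_integrable.2 (hM.integrable n)) hv hvR n
  refine martingale_of_condExp_sub_eq_zero_nat (fun n => ?_) integrable fun n => ?_
  · refine Finset.stronglyMeasurable_sum _ fun k hk => ?_
    have hkn : k + 1 ≤ n := mem_range.1 hk
    exact ((hv.measurable_add_one k).mono (ℱ.mono (by omega))).mul
      (((hM.stronglyMeasurable (k + 1)).mono (ℱ.mono hkn)).sub
        ((hM.stronglyMeasurable k).mono (ℱ.mono (by omega))))
  · have h := (integrable (n + 1)).sub (integrable n)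
    rw [martingaleTransform_succ_sub] at h ⊢
    exact condExp_mul_eq_zero_of_condExp_eq_zero (hv.measurable_add_one n) h
      ((hM.integrable (n + 1)).sub (hM.integrable n)) (condExp_succ_sub_eq_zero hM n)

section StrongLaw

variable {B : ℕ → Ω → ℝ}

theorem inv_sq_mul_sub_le_inv_sub_inv {x y : ℝ} (hx : 0 < x) (hxy : x ≤ y) :
    y⁻¹ ^ 2 * (y - x) ≤ x⁻¹ - y⁻¹ := by
  have hy : 0 < y := hx.trans_le hxy
  calc y⁻¹ ^ 2 * (y - x) = y⁻¹ * ((y - x) * y⁻¹) := by ring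
    _ ≤ x⁻¹ * ((y - x) * y⁻¹) := by
        have := sub_nonneg.2 hxy
        gcongr
    _ = x⁻¹ - y⁻¹ := by field_simp

theorem norm_inv_le_one_of_one_le {x : ℝ} (hx : 1 ≤ x) : ‖x⁻¹‖ ≤ 1 := by
  rw [norm_inv]
  exact inv_le_one_of_one_le₀ (hx.trans (le_abs_self x))

theorem integrable_inv_of_one_le {f : Ω → ℝ} (hf : AEStronglyMeasurable f μ)
    (hf₁ : ∀ᵐ ω ∂μ, 1 ≤ f ω) : Integrable f⁻¹ μ :=
  Integrable.of_bound hf.inv₀ 1 (hf₁.mono fun _ => norm_inv_le_one_of_one_le)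

theorem integral_inv_mul_sub_sq_le (hM₂ : ∀ n, MemLp (M n) 2 μ)
    (hB : IsStronglyPredictable ℱ B) (hB₁ : ∀ᵐ ω ∂μ, ∀ n, 1 ≤ B n ω)
    (hvar : ∀ n, μ[(M (n + 1) - M n) ^ 2 | ℱ n] ≤ᵐ[μ] B (n + 1) - B n) (n : ℕ) :
    ∫ ω, ((B (n + 1) ω)⁻¹ * (M (n + 1) ω - M n ω)) ^ 2 ∂μ ≤
      ∫ ω, (B n ω)⁻¹ ∂μ - ∫ ω, (B (n + 1) ω)⁻¹ ∂μ := by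
  have hB_inv (k : ℕ) : Integrable (B k)⁻¹ μ := integrable_inv_of_one_le
    ((hB.stronglyAdapted k).mono (ℱ.le k)).aestronglyMeasurable (hB₁.mono fun ω hω => hω k)
  have hv : StronglyMeasurable[ℱ n] ((B (n + 1))⁻¹ ^ 2) := (hB.measurable_add_one n).inv₀.pow 2
  have hv_le : ∀ᵐ ω ∂μ, ‖((B (n + 1))⁻¹ ^ 2) ω‖ ≤ 1 := by
    filter_upwards [hB₁] with ω hω
    rw [Pi.pow_apply, Pi.inv_apply, norm_pow]
    exact pow_le_one₀ (norm_nonneg _) (norm_inv_le_one_of_one_le (hω (n + 1)))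
  have hΔ : Integrable ((M (n + 1) - M n) ^ 2) μ := ((hM₂ (n + 1)).sub (hM₂ n)).integrable_sq
  calc ∫ ω, ((B (n + 1) ω)⁻¹ * (M (n + 1) ω - M n ω)) ^ 2 ∂μ
      = ∫ ω, ((B (n + 1))⁻¹ ^ 2 * (M (n + 1) - M n) ^ 2) ω ∂μ := by
        simp only [Pi.mul_apply, Pi.pow_apply, Pi.inv_apply, Pi.sub_apply, mul_pow]
    _ = ∫ ω, μ[(B (n + 1))⁻¹ ^ 2 * (M (n + 1) - M n) ^ 2 | ℱ n] ω ∂μ :=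
        (integral_condExp (ℱ.le n)).symm
    _ ≤ ∫ ω, (B n ω)⁻¹ - (B (n + 1) ω)⁻¹ ∂μ := by
        refine integral_mono_ae integrable_condExp ((hB_inv n).sub (hB_inv (n + 1))) ?_
        filter_upwards [condExp_stronglyMeasurable_mul_of_bound (ℱ.le n) hv hΔ 1 hv_le, hvar n,
          ae_monotone_of_condExp_sq_le hvar, hB₁] with ω h_pull h_var h_mono h_one
        rw [h_pull]
        exact (mul_le_mul_of_nonneg_left h_var (sq_nonneg _)).trans
          (inv_sq_mul_sub_le_inv_sub_inv (one_pos.trans_le (h_one n)) (h_mono n.le_succ))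
    _ = _ := integral_sub (hB_inv n) (hB_inv (n + 1))

theorem ae_exists_tendsto_martingaleTransform_inv (hM : Martingale M ℱ μ)
    (hM₂ : ∀ n, MemLp (M n) 2 μ) (hB : IsStronglyPredictable ℱ B) (hB₁ : ∀ᵐ ω ∂μ, 1 ≤ B 0 ω)
    (hvar : ∀ n, μ[(M (n + 1) - M n) ^ 2 | ℱ n] ≤ᵐ[μ] B (n + 1) - B n) :
    ∀ᵐ ω ∂μ, ∃ c, Tendsto (fun n => martingaleTransform B⁻¹ M n ω) atTop (𝓝 c) := by
  have hB_one : ∀ᵐ ω ∂μ, ∀ n, 1 ≤ B n ω := by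
    filter_upwards [hB₁, ae_monotone_of_condExp_sq_le hvar] with ω h_one h_mono n
    exact h_one.trans (h_mono n.zero_le)
  have hv : IsStronglyPredictable ℱ B⁻¹ := StronglyMeasurable.inv₀ hB
  have hv_le (n : ℕ) : ∀ᵐ ω ∂μ, |B⁻¹ (n + 1) ω| ≤ 1 :=
    hB_one.mono fun ω hω => norm_inv_le_one_of_one_le (hω (n + 1))
  have hN := martingale_martingaleTransform hM hv hv_le
  have hN₂ := memLp_martingaleTransform hM₂ hv hv_le
  have energy (n : ℕ) : ∫ ω, martingaleTransform B⁻¹ M n ω ^ 2 ∂μ ≤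
      ∫ ω, (B 0 ω)⁻¹ ∂μ - ∫ ω, (B n ω)⁻¹ ∂μ := by
    induction n with
    | zero => simp [martingaleTransform]
    | succ n ih =>
      have hΔ (ω : Ω) : martingaleTransform B⁻¹ M (n + 1) ω - martingaleTransform B⁻¹ M n ω =
          (B (n + 1) ω)⁻¹ * (M (n + 1) ω - M n ω) :=
        congrFun (martingaleTransform_succ_sub B⁻¹ M n) ω
      simp only [integral_sq_succ_of_martingale hN hN₂, hΔ]
      linarith [integral_inv_mul_sub_sq_le hM₂ hB hB_one hvar n]
  refine ae_exists_tendsto_of_integral_sq_le hN hN₂ fun n => (energy n).trans (sub_le_self _ ?_)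
  exact integral_nonneg_of_ae (hB_one.mono fun ω hω => inv_nonneg.2 (zero_le_one.trans (hω n)))

theorem ae_isLittleO_of_condExp_sq_le (hM : Martingale M ℱ μ)
    (hM₂ : ∀ n, MemLp (M n) 2 μ) (hB : IsStronglyPredictable ℱ B)
    (hvar : ∀ n, μ[(M (n + 1) - M n) ^ 2 | ℱ n] ≤ᵐ[μ] B (n + 1) - B n) :
    ∀ᵐ ω ∂μ, Tendsto (fun n => B n ω) atTop atTop →
      (fun n => M n ω) =o[atTop] fun n => B n ω := by
  set A : ℕ → Ω → ℝ := fun n ω => B n ω + (1 - B 0 ω) with hA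
  have hA_pred : IsStronglyPredictable ℱ A := .of_measurable_add_one
    ((hB.stronglyAdapted 0).add (stronglyMeasurable_const.sub (hB.stronglyAdapted 0))) fun n =>
    (hB.measurable_add_one n).add
      (stronglyMeasurable_const.sub ((hB.stronglyAdapted 0).mono (ℱ.mono n.zero_le)))
  have hA_sub (n : ℕ) : A (n + 1) - A n = B (n + 1) - B n := by
    ext ω
    simp [hA]
  have hA_var (n : ℕ) : μ[(M (n + 1) - M n) ^ 2 | ℱ n] ≤ᵐ[μ] A (n + 1) - A n :=
    hA_sub n ▸ hvar n
  filter_upwards [ae_exists_tendsto_martingaleTransform_inv hM hM₂ hA_pred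
    (.of_forall fun ω => by simp [hA]) hA_var, ae_monotone_of_condExp_sq_le hA_var]
    with ω ⟨c, hc⟩ hA_mono hB_top
  have const_isLittleO (x : ℝ) : (fun _ : ℕ => x) =o[atTop] fun n => B n ω :=
    Asymptotics.isLittleO_const_left.2 (.inr (tendsto_norm_atTop_atTop.comp hB_top))
  have hA_isBigO : (fun n => A n ω) =O[atTop] fun n => B n ω :=
    (Asymptotics.isBigO_refl _ _).add (const_isLittleO _).isBigO
  have kronecker : (fun n => ∑ k ∈ range n, (M (k + 1) ω - M k ω)) =o[atTop] fun n => A n ω :=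
    isLittleO_sum_of_tendsto_sum_inv_smul hA_mono (by simp [hA])
      (tendsto_atTop_add_const_right _ _ hB_top) (by simpa [martingaleTransform] using hc)
  simpa only [sum_range_sub (fun n => M n ω), sub_add_cancel] using
    (kronecker.trans_isBigO hA_isBigO).add (const_isLittleO (M 0 ω))

end StrongLaw

end Martingale

theorem tendsto_harmonic_atTop : Tendsto (fun n => (harmonic n : ℝ)) atTop atTop :=
  tendsto_atTop_mono log_add_one_le_harmonic <| Real.tendsto_log_atTop.comp <|
    tendsto_natCast_atTop_atTop.comp (tendsto_add_atTop_nat 1)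

section RunningMean

variable {u x : ℕ → ℝ}

/-- Squaring the recursion and dividing by `k + 1` gives
`(k + 1) u (k + 1)² - k u k² = 2 u k x k + (x k² - 2 u k x k - k u k²) / (k + 1)`,
where `x k² - 2 u k x k ≥ x k² / 2 - 2 u k²` by AM-GM. -/
theorem harmonic_half_add_two_mul_sum_le (hx : ∀ k, 1 ≤ x k ^ 2)
    (hrec : ∀ k : ℕ, ((k : ℝ) + 1) * u (k + 1) = k * u k + x k) (n : ℕ) :
    (harmonic n : ℝ) / 2 + 2 * ∑ k ∈ range n, u k * x k ≤
      n * u n ^ 2 + 2 * ∑ k ∈ range n, u k ^ 2 := by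
  induction n with
  | zero => simp
  | succ n ih =>
    have step : ((n : ℝ) + 1)⁻¹ / 2 + 2 * (u n * x n) + n * u n ^ 2 ≤
        (n + 1) * u (n + 1) ^ 2 + 2 * u n ^ 2 := by
      have hn : (0 : ℝ) < n + 1 := by positivity
      have scaled : ((n : ℝ) + 1) * (((n : ℝ) + 1)⁻¹ / 2 + 2 * (u n * x n) + n * u n ^ 2) ≤
          (n + 1) * ((n + 1) * u (n + 1) ^ 2 + 2 * u n ^ 2) := calc
        ((n : ℝ) + 1) * (((n : ℝ) + 1)⁻¹ / 2 + 2 * (u n * x n) + n * u n ^ 2)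
            = 1 / 2 + (n + 1) * (2 * (u n * x n) + n * u n ^ 2) := by
              field_simp
              ring
        _ ≤ (n * u n + x n) ^ 2 + (n + 1) * (2 * u n ^ 2) := by
          nlinarith [hx n, sq_nonneg (2 * u n - x n),
            mul_nonneg (Nat.cast_nonneg (α := ℝ) n) (sq_nonneg (u n))]
        _ = (n + 1) * ((n + 1) * u (n + 1) ^ 2 + 2 * u n ^ 2) := by
          rw [← hrec n]
          ring
      exact le_of_mul_le_mul_left scaled hn
    simp only [sum_range_succ, harmonic_succ]
    push_cast
    linarith

theorem not_summable_sq_of_isLittleO_harmonic (hx : ∀ k, 1 ≤ x k ^ 2)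
    (hrec : ∀ k : ℕ, ((k : ℝ) + 1) * u (k + 1) = k * u k + x k)
    (ho : (fun n => ∑ k ∈ range n, u k * x k) =o[atTop] fun n => (harmonic n : ℝ)) :
    ¬ Summable fun k => u k ^ 2 := by
  intro hu
  have one_le : ∀ᶠ n : ℕ in atTop, 1 ≤ n * u n ^ 2 := by
    filter_upwards [ho.bound (show (0 : ℝ) < 1 / 8 by norm_num),
      tendsto_harmonic_atTop.eventually_ge_atTop (4 * (1 + 2 * ∑' k, u k ^ 2))] with n h_cross h_log
    have h_sum : ∑ k ∈ range n, u k ^ 2 ≤ ∑' k, u k ^ 2 :=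
      hu.sum_le_tsum _ fun k _ => sq_nonneg _
    have h_tsum : 0 ≤ ∑' k, u k ^ 2 := tsum_nonneg fun k => sq_nonneg _
    rw [Real.norm_eq_abs, Real.norm_of_nonneg (by linarith)] at h_cross
    linarith [neg_le_of_abs_le h_cross, harmonic_half_add_two_mul_sum_le hx hrec n]
  refine Real.not_summable_natCast_inv (hu.of_norm_bounded_eventually_nat ?_)
  filter_upwards [one_le, eventually_gt_atTop 0] with n hn hn_pos
  rw [norm_inv, RCLike.norm_natCast]
  exact (inv_le_iff_one_le_mul₀' (by positivity)).2 hn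

end RunningMean

/-- The mean `S n / n` of the first `n` steps; at `n = 0` it is `0`, both as an empty sum and as a
quotient by zero, so that sums over `1 ≤ k ≤ n - 1` may be taken over `k < n`. -/
def erwMean (X : ℕ → Ω → ℝ) (n : ℕ) (ω : Ω) : ℝ :=
  erwS X n ω / n

/-- The innovation `X (n + 1) - (2p - 1) S n / n` of the walk at time `n + 1`. -/
def erwNoise (X : ℕ → Ω → ℝ) (p : ℝ) (n : ℕ) (ω : Ω) : ℝ :=
  X (n + 1) ω - (2 * p - 1) * erwMean X n ω

/-- The martingale `∑ k < n, (S k / k) (X (k + 1) - (2p - 1) S k / k)` that governs the error of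
`p̂ n`. -/
def erwMartingale (X : ℕ → Ω → ℝ) (p : ℝ) (n : ℕ) (ω : Ω) : ℝ :=
  ∑ k ∈ range n, erwMean X k ω * erwNoise X p k ω

section Pathwise

variable (X : ℕ → Ω → ℝ) (p : ℝ) (n : ℕ) (ω : Ω)

theorem erwMean_zero : erwMean X 0 ω = 0 := by
  simp [erwMean]

theorem add_one_mul_erwMean_succ :
    ((n : ℝ) + 1) * erwMean X (n + 1) ω = n * erwMean X n ω + X (n + 1) ω := by
  have natCast_mul_erwMean (m : ℕ) : m * erwMean X m ω = erwS X m ω := by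
    rcases eq_or_ne m 0 with rfl | hm
    · simp [erwS]
    · exact mul_div_cancel₀ _ (Nat.cast_ne_zero.2 hm)
  rw [← Nat.cast_succ, natCast_mul_erwMean, natCast_mul_erwMean, erwS, erwS,
    sum_Icc_succ_top (by omega)]

theorem sum_Icc_one_sub_one_eq_sum_range {A : Type*} [AddCommMonoid A] {f : ℕ → A} (hf : f 0 = 0)
    (n : ℕ) : ∑ k ∈ Icc 1 (n - 1), f k = ∑ k ∈ range n, f k := by
  refine sum_subset (fun k hk => ?_) fun k hk hk' => ?_
  · simp only [mem_Icc, mem_range] at *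
    omega
  · obtain rfl : k = 0 := by
      simp only [mem_Icc, mem_range] at *
      omega
    exact hf

theorem erwV_eq_sum_range : erwV X n ω = 4 * ∑ k ∈ range n, erwMean X k ω ^ 2 := by
  rw [← sum_Icc_one_sub_one_eq_sum_range (by simp [erwMean_zero])]
  rfl

theorem erwV_nonneg : 0 ≤ erwV X n ω :=
  mul_nonneg zero_le_four (sum_nonneg fun _ _ => sq_nonneg _)

theorem erwV_succ_sub : erwV X (n + 1) ω - erwV X n ω = 4 * erwMean X n ω ^ 2 := by
  simp only [erwV_eq_sum_range, sum_range_succ]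
  ring

theorem erwMartingale_succ_sub :
    erwMartingale X p (n + 1) - erwMartingale X p n = erwMean X n * erwNoise X p n := by
  ext ω
  simp [erwMartingale, sum_range_succ]

theorem sum_erwMean_mul_step :
    ∑ k ∈ range n, erwMean X k ω * X (k + 1) ω =
      erwMartingale X p n ω + (2 * p - 1) / 4 * erwV X n ω := by
  rw [erwMartingale, erwV_eq_sum_range, ← mul_assoc, mul_sum, ← sum_add_distrib]
  refine sum_congr rfl fun k _ => ?_
  rw [erwNoise]
  ring

variable {X n ω} in
theorem erwPhat_eq_two_mul_erwMartingale_div_add (hV : erwV X n ω ≠ 0) :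
    erwPhat X n ω = 2 * (erwMartingale X p n ω / erwV X n ω) + p := by
  have num : ∑ k ∈ Icc 1 (n - 1), erwMean X k ω * (X (k + 1) ω + erwMean X k ω) =
      erwMartingale X p n ω + p / 2 * erwV X n ω := by
    rw [sum_Icc_one_sub_one_eq_sum_range (by simp [erwMean_zero])]
    simp only [mul_add, sum_add_distrib, sum_erwMean_mul_step X p, ← pow_two]
    rw [erwV_eq_sum_range]
    ring
  have den : 2 * ∑ k ∈ Icc 1 (n - 1), erwMean X k ω ^ 2 = erwV X n ω / 2 := by
    rw [erwV_eq_sum_range, sum_Icc_one_sub_one_eq_sum_range (by simp [erwMean_zero])]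
    ring
  calc erwPhat X n ω
      = (erwMartingale X p n ω + p / 2 * erwV X n ω) / (erwV X n ω / 2) := by
        rw [← num, ← den]
        rfl
    _ = 2 * (erwMartingale X p n ω / erwV X n ω) + p := by field_simp

end Pathwise

namespace IsERW

variable {m0 : MeasurableSpace Ω} {μ : Measure Ω} {ℱ : Filtration ℕ m0} {X : ℕ → Ω → ℝ} {p : ℝ}

theorem abs_step (h : IsERW μ ℱ X p) {n : ℕ} (hn : 1 ≤ n) (ω : Ω) : |X n ω| = 1 := by
  rcases h.2.2.1 n hn ω with hX | hX <;> simp [hX]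

theorem abs_erwMean_le_one (h : IsERW μ ℱ X p) (n : ℕ) (ω : Ω) : |erwMean X n ω| ≤ 1 := by
  rw [erwMean, abs_div, Nat.abs_cast]
  refine div_le_one_of_le₀ ?_ n.cast_nonneg
  calc |erwS X n ω| ≤ ∑ k ∈ Icc 1 n, |X k ω| := abs_sum_le_sum_abs _ _
    _ = n := by simp [sum_congr rfl fun _ hk => h.abs_step (mem_Icc.1 hk).1 ω]

theorem abs_erwNoise_le_two (h : IsERW μ ℱ X p) (n : ℕ) (ω : Ω) : |erwNoise X p n ω| ≤ 2 := by
  have ha : |2 * p - 1| ≤ 1 := abs_le.2 ⟨by linarith [h.1], by linarith [h.2.1]⟩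
  calc |erwNoise X p n ω| ≤ |X (n + 1) ω| + |(2 * p - 1) * erwMean X n ω| := abs_sub _ _
    _ ≤ 1 + 1 := by
      rw [h.abs_step n.succ_pos, abs_mul]
      gcongr
      exact mul_le_one₀ ha (abs_nonneg _) (h.abs_erwMean_le_one n ω)
    _ = 2 := by norm_num

theorem stronglyMeasurable_step (h : IsERW μ ℱ X p) {n : ℕ} (hn : 1 ≤ n) :
    StronglyMeasurable[ℱ n] (X n) :=
  (h.2.2.2.1 n hn).stronglyMeasurable

theorem stronglyAdapted_erwMean (h : IsERW μ ℱ X p) : StronglyAdapted ℱ (erwMean X) := by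
  intro n
  refine (Measurable.div_const (Finset.measurable_fun_sum _ fun _ hk => ?_) _).stronglyMeasurable
  exact ((h.stronglyMeasurable_step (mem_Icc.1 hk).1).mono (ℱ.mono (mem_Icc.1 hk).2)).measurable

theorem stronglyMeasurable_erwNoise (h : IsERW μ ℱ X p) (n : ℕ) :
    StronglyMeasurable[ℱ (n + 1)] (erwNoise X p n) :=
  (h.stronglyMeasurable_step n.succ_pos).sub
    (((h.stronglyAdapted_erwMean n).mono (ℱ.mono n.le_succ)).const_mul _)

theorem stronglyAdapted_erwMartingale (h : IsERW μ ℱ X p) :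
    StronglyAdapted ℱ (erwMartingale X p) := by
  intro n
  refine Finset.stronglyMeasurable_fun_sum _ fun k hk => ?_
  have hkn : k + 1 ≤ n := mem_range.1 hk
  exact ((h.stronglyAdapted_erwMean k).mono (ℱ.mono (by omega))).mul
    ((h.stronglyMeasurable_erwNoise k).mono (ℱ.mono hkn))

theorem stronglyMeasurable_erwV_succ (h : IsERW μ ℱ X p) (n : ℕ) :
    StronglyMeasurable[ℱ n] (erwV X (n + 1)) := by
  refine StronglyMeasurable.const_mul (Finset.stronglyMeasurable_fun_sum _ fun k hk => ?_) _
  exact ((h.stronglyAdapted_erwMean k).mono (ℱ.mono (mem_Icc.1 hk).2)).pow 2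

variable [IsFiniteMeasure μ]

theorem integrable_step (h : IsERW μ ℱ X p) {n : ℕ} (hn : 1 ≤ n) : Integrable (X n) μ :=
  .of_bound ((h.stronglyMeasurable_step hn).mono (ℱ.le n)).aestronglyMeasurable 1
    (.of_forall fun ω => (h.abs_step hn ω).le)

theorem integrable_erwMean (h : IsERW μ ℱ X p) (n : ℕ) : Integrable (erwMean X n) μ :=
  .of_bound ((h.stronglyAdapted_erwMean n).mono (ℱ.le n)).aestronglyMeasurable 1
    (.of_forall (h.abs_erwMean_le_one n))

theorem integrable_erwNoise (h : IsERW μ ℱ X p) (n : ℕ) : Integrable (erwNoise X p n) μ :=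
  (h.integrable_step n.succ_pos).sub ((h.integrable_erwMean n).const_mul _)

theorem memLp_erwMartingale (h : IsERW μ ℱ X p) (q : ℝ≥0∞) (n : ℕ) :
    MemLp (erwMartingale X p n) q μ := by
  refine memLp_finsetSum _ fun k _ => MemLp.of_bound ?_ 2 (.of_forall fun ω => ?_)
  · exact (h.integrable_erwMean k).aestronglyMeasurable.mul
      (h.integrable_erwNoise k).aestronglyMeasurable
  · rw [norm_mul, ← one_mul (2 : ℝ)]
    exact mul_le_mul (h.abs_erwMean_le_one k ω) (h.abs_erwNoise_le_two k ω) (abs_nonneg _)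
      zero_le_one

theorem condExp_erwNoise (h : IsERW μ ℱ X p) {n : ℕ} (hn : 1 ≤ n) :
    μ[erwNoise X p n | ℱ n] =ᵐ[μ] 0 := by
  have h_drift : μ[fun ω => (2 * p - 1) * erwMean X n ω | ℱ n] =
      fun ω => (2 * p - 1) * erwMean X n ω :=
    condExp_of_stronglyMeasurable (ℱ.le n) ((h.stronglyAdapted_erwMean n).const_mul _)
      ((h.integrable_erwMean n).const_mul _)
  filter_upwards [condExp_sub (h.integrable_step n.succ_pos)
    ((h.integrable_erwMean n).const_mul (2 * p - 1)) (ℱ n), h.2.2.2.2 n hn] with ω h_sub h_step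
  refine h_sub.trans ?_
  rw [Pi.sub_apply, h_step, h_drift]
  exact sub_self _

theorem martingale_erwMartingale (h : IsERW μ ℱ X p) : Martingale (erwMartingale X p) ℱ μ := by
  have integrable (n : ℕ) : Integrable (erwMartingale X p n) μ :=
    (h.memLp_erwMartingale 1 n).integrable le_rfl
  refine martingale_of_condExp_sub_eq_zero_nat h.stronglyAdapted_erwMartingale integrable
    fun n => ?_
  have hΔ := (integrable (n + 1)).sub (integrable n)
  rw [erwMartingale_succ_sub] at hΔ ⊢
  rcases n.eq_zero_or_pos with rfl | hn
  · have : erwMean X 0 * erwNoise X p 0 = 0 := by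
      ext ω
      simp [erwMean_zero]
    rw [this, condExp_zero]
  · exact condExp_mul_eq_zero_of_condExp_eq_zero (h.stronglyAdapted_erwMean n) hΔ
      (h.integrable_erwNoise n) (h.condExp_erwNoise hn)

theorem condExp_sq_erwMartingale_succ_sub_le (h : IsERW μ ℱ X p) (n : ℕ) :
    μ[(erwMartingale X p (n + 1) - erwMartingale X p n) ^ 2 | ℱ n] ≤ᵐ[μ]
      erwV X (n + 1) - erwV X n := by
  have hV : erwV X (n + 1) - erwV X n = fun ω => 4 * erwMean X n ω ^ 2 :=
    funext (erwV_succ_sub X n)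
  have hV_int : Integrable (fun ω => 4 * erwMean X n ω ^ 2) μ :=
    (MemLp.integrable_sq (.of_bound (h.integrable_erwMean n).aestronglyMeasurable 1
      (.of_forall (h.abs_erwMean_le_one n)))).const_mul 4
  rw [hV]
  refine (condExp_mono ?_ hV_int (.of_forall fun ω => ?_)).trans_eq
    (condExp_of_stronglyMeasurable (ℱ.le n) (((h.stronglyAdapted_erwMean n).pow 2).const_mul 4)
      hV_int).eventuallyEq
  · exact ((h.memLp_erwMartingale 2 (n + 1)).sub (h.memLp_erwMartingale 2 n)).integrable_sq
  · have hξ : erwNoise X p n ω ^ 2 ≤ 2 ^ 2 :=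
      sq_le_sq' (neg_le_of_abs_le (h.abs_erwNoise_le_two n ω))
        (le_of_abs_le (h.abs_erwNoise_le_two n ω))
    simp only [erwMartingale_succ_sub, Pi.pow_apply, Pi.mul_apply]
    nlinarith [mul_le_mul_of_nonneg_left hξ (sq_nonneg (erwMean X n ω))]

theorem ae_isLittleO_erwMartingale (h : IsERW μ ℱ X p) {c : ℕ → ℝ} (hc : Monotone c) :
    ∀ᵐ ω ∂μ, Tendsto (fun n => erwV X n ω + c n) atTop atTop →
      (fun n => erwMartingale X p n ω) =o[atTop] fun n => erwV X n ω + c n := by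
  have h_pred : IsStronglyPredictable ℱ fun n ω => erwV X n ω + c n := by
    refine .of_measurable_add_one ?_ fun n =>
      (h.stronglyMeasurable_erwV_succ n).add stronglyMeasurable_const
    simpa [erwV] using stronglyMeasurable_const
  refine ae_isLittleO_of_condExp_sq_le h.martingale_erwMartingale (h.memLp_erwMartingale 2) h_pred
    fun n => ?_
  filter_upwards [h.condExp_sq_erwMartingale_succ_sub_le n] with ω h_var
  refine h_var.trans ?_
  simp only [Pi.sub_apply]
  linarith [hc n.le_succ]

theorem ae_tendsto_erwV_atTop (h : IsERW μ ℱ X p) :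
    ∀ᵐ ω ∂μ, Tendsto (fun n => erwV X n ω) atTop atTop := by
  have harmonic_mono : Monotone fun n => (harmonic n : ℝ) := monotone_nat_of_le_succ fun n => by
    rw [harmonic_succ]
    push_cast
    exact le_add_of_nonneg_right (by positivity)
  filter_upwards [h.ae_isLittleO_erwMartingale harmonic_mono] with ω hM
  suffices ¬ Summable fun k => erwMean X k ω ^ 2 by
    simp only [erwV_eq_sum_range]
    exact Tendsto.const_mul_atTop four_pos <|
      (not_summable_iff_tendsto_nat_atTop_of_nonneg fun k => sq_nonneg _).1 this
  intro hu
  have hV : (fun n => erwV X n ω) =o[atTop] fun n => (harmonic n : ℝ) := by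
    have hV_lim : Tendsto (fun n => erwV X n ω) atTop (𝓝 (4 * ∑' k, erwMean X k ω ^ 2)) := by
      simpa only [erwV_eq_sum_range] using hu.hasSum.tendsto_sum_nat.const_mul 4
    exact (hV_lim.isBigO_one ℝ).trans_isLittleO (Asymptotics.isLittleO_const_left.2
      (.inr (tendsto_norm_atTop_atTop.comp tendsto_harmonic_atTop)))
  have hM_harmonic : (fun n => erwMartingale X p n ω) =o[atTop] fun n => (harmonic n : ℝ) :=
    (hM (tendsto_atTop_mono (fun n => le_add_of_nonneg_left (erwV_nonneg X n ω))
      tendsto_harmonic_atTop)).trans_isBigO (hV.isBigO.add (Asymptotics.isBigO_refl _ _))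
  refine not_summable_sq_of_isLittleO_harmonic (x := fun k => X (k + 1) ω)
    (fun k => ?_) (fun k => add_one_mul_erwMean_succ X k ω) ?_ hu
  · rw [← sq_abs, h.abs_step k.succ_pos, one_pow]
  · simpa only [sum_erwMean_mul_step X p] using hM_harmonic.add (hV.const_mul_left _)

end IsERW

/-- Strong consistency of `p̂_n`: whatever the value of `p ∈ [0,1]`,
`p̂_n → p` almost surely. -/
theorem erw_phat_strongly_consistent
    {m0 : MeasurableSpace Ω} (μ : Measure Ω) [IsProbabilityMeasure μ]
    (ℱ : Filtration ℕ m0) (X : ℕ → Ω → ℝ) (p : ℝ)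
    (hERW : IsERW μ ℱ X p) :
    ∀ᵐ ω ∂μ, Tendsto (fun n => erwPhat X n ω) atTop (𝓝 p) := by
  filter_upwards [hERW.ae_tendsto_erwV_atTop, hERW.ae_isLittleO_erwMartingale monotone_const]
    with ω hV hM
  have error : Tendsto (fun n => erwMartingale X p n ω / erwV X n ω) atTop (𝓝 0) := by
    simpa using (hM (tendsto_atTop_add_const_right _ (0 : ℝ) hV)).tendsto_div_nhds_zero
  have shifted : Tendsto (fun n => 2 * (erwMartingale X p n ω / erwV X n ω) + p) atTop (𝓝 p) := by
    simpa using (error.const_mul 2).add_const p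
  refine shifted.congr' ?_
  filter_upwards [hV.eventually_ne_atTop 0] with n hn
  exact (erwPhat_eq_two_mul_erwMartingale_div_add p hn).symm
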